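/- Let D ≥ 2, L ≥ 1 be integers, K = L^D, and for each N ≥ 1 let ρ_N be the pushforward of the product Haar measure on U(N) gauge configurations under the normalized Wilson action t. Define m_l = 0 for odd l and m_l = (l−1)!! / (4K/(D(D−1)))^{l/2} for even l. Then for every fixed l ≥ 1, the l-th moment of ρ_N satisfies ∫ t^l dρ_N(t) = m_l / N^l + O(1/N^{l+1}) as N → ∞; that is, there exist a constant C > 0 and N₀ such that |N^l ∫ t^l dρ_N − m_l| ≤ C/N for all N ≥ N₀. -/

import Mathlib

open MeasureTheory Matrix Finset Filter
open scoped Nat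

noncomputable section

/-- Borel measurable structure on the unitary group `U(N)`. -/
instance (N : ℕ) : MeasurableSpace (Matrix.unitaryGroup (Fin N) ℂ) := borel _

instance (N : ℕ) : BorelSpace (Matrix.unitaryGroup (Fin N) ℂ) := ⟨rfl⟩

/-- Sites of the `D`-dimensional periodic lattice of side `L`: the discrete torus `(ℤ/Lℤ)^D`. -/
abbrev Site (D L : ℕ) := Fin D → ZMod L

/-- Edges: a site together with a positive coordinate direction. -/
abbrev Edge (D L : ℕ) := Site D L × Fin D

/-- Lattice gauge configurations: a unitary matrix `U_{x,μ} ∈ U(N)` on every edge. -/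
abbrev Conf (D L N : ℕ) := Edge D L → Matrix.unitaryGroup (Fin N) ℂ

/-- The site displaced one step from `x` in direction `μ`. -/
def shift {D L : ℕ} (x : Site D L) (μ : Fin D) : Site D L :=
  Function.update x μ (x μ + 1)

/-- The normalized Wilson action
`t(U) = (1/K) Σ_x Σ_{μ<ν} (1/N) Re Tr (U_{x,ν}† U_{x+ν,μ}† U_{x+μ,ν} U_{x,μ})`, with `K = L^D`. -/
def wilsonAction (D L N : ℕ) [NeZero L] (U : Conf D L N) : ℝ :=
  ((L : ℝ) ^ D)⁻¹ *
    ∑ x : Site D L, ∑ p ∈ Finset.univ.filter (fun p : Fin D × Fin D => p.1 < p.2),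
      (N : ℝ)⁻¹ *
        (Matrix.trace ((U (x, p.2) : Matrix (Fin N) (Fin N) ℂ)ᴴ
          * (U (shift x p.2, p.1) : Matrix (Fin N) (Fin N) ℂ)ᴴ
          * (U (shift x p.1, p.2) : Matrix (Fin N) (Fin N) ℂ)
          * (U (x, p.1) : Matrix (Fin N) (Fin N) ℂ))).re

/-- The product over all edges of the measure `haarU` on `U(N)`. -/
def confMeasure (D L N : ℕ) [NeZero L]
    (haarU : Measure (Matrix.unitaryGroup (Fin N) ℂ)) : Measure (Conf D L N) :=
  Measure.pi fun _ => haarU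

section Loops

variable {E : Type*} {N : ℕ}

instance instCompactSpaceUnitaryGroup : CompactSpace (Matrix.unitaryGroup (Fin N) ℂ) := by
  suffices IsCompact (Matrix.unitaryGroup (Fin N) ℂ : Set (Matrix (Fin N) (Fin N) ℂ)) from
    isCompact_iff_compactSpace.mp this
  have hsub : (Matrix.unitaryGroup (Fin N) ℂ : Set (Matrix (Fin N) (Fin N) ℂ)) ⊆
      Set.univ.pi fun _ => Set.univ.pi fun _ => Metric.closedBall (0 : ℂ) 1 := by
    intro U hU i _ j _
    simpa using entry_norm_bound_of_unitary hU i j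
  have hclosed : IsClosed (unitary (Matrix (Fin N) (Fin N) ℂ) : Set (Matrix (Fin N) (Fin N) ℂ)) :=
    have : ContinuousStar (Matrix (Fin N) (Fin N) ℂ) := ⟨continuous_id.matrix_conjTranspose⟩
    isClosed_unitary
  exact (isCompact_univ_pi fun _ => isCompact_univ_pi fun _ =>
    isCompact_closedBall (0 : ℂ) 1).of_isClosed_subset hclosed hsub

instance instSecondCountableUnitaryGroup :
    SecondCountableTopology (Matrix.unitaryGroup (Fin N) ℂ) :=
  have : SecondCountableTopology (Matrix (Fin N) (Fin N) ℂ) :=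
    inferInstanceAs (SecondCountableTopology (Fin N → Fin N → ℂ))
  TopologicalSpace.Subtype.secondCountableTopology _

/-- The holonomy of a gauge field `U` along the word `w` in the edges and their inverses. -/
def holonomy (U : E → Matrix.unitaryGroup (Fin N) ℂ) (w : List (E × Bool)) :
    Matrix (Fin N) (Fin N) ℂ :=
  (FreeGroup.lift U (FreeGroup.mk w) : Matrix.unitaryGroup (Fin N) ℂ)

/-- The Wilson loop observable: the unnormalized trace of the holonomy. -/
def loopTrace (U : E → Matrix.unitaryGroup (Fin N) ℂ) (w : List (E × Bool)) : ℂ :=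
  (holonomy U w).trace

@[simp]
lemma holonomy_nil (U : E → Matrix.unitaryGroup (Fin N) ℂ) : holonomy U [] = 1 := by
  simp [holonomy, ← FreeGroup.one_eq_mk]

lemma holonomy_append (U : E → Matrix.unitaryGroup (Fin N) ℂ) (v w : List (E × Bool)) :
    holonomy U (v ++ w) = holonomy U v * holonomy U w := by
  simp [holonomy, ← FreeGroup.mul_mk]

lemma holonomy_cons (U : E → Matrix.unitaryGroup (Fin N) ℂ) (a : E × Bool)
    (w : List (E × Bool)) : holonomy U (a :: w) = holonomy U [a] * holonomy U w :=
  holonomy_append U [a] w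

lemma holonomy_singleton_true (U : E → Matrix.unitaryGroup (Fin N) ℂ) (e : E) :
    holonomy U [(e, true)] = U e := by
  simp [holonomy]

lemma holonomy_singleton_false (U : E → Matrix.unitaryGroup (Fin N) ℂ) (e : E) :
    holonomy U [(e, false)] = (U e : Matrix (Fin N) (Fin N) ℂ)ᴴ := by
  simp [holonomy, Matrix.star_eq_conjTranspose]

lemma continuous_holonomy (w : List (E × Bool)) :
    Continuous fun U : E → Matrix.unitaryGroup (Fin N) ℂ => holonomy U w := by
  induction w with
  | nil => simpa using continuous_const
  | cons a w ih =>
    simp_rw [holonomy_cons _ a w]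
    refine Continuous.mul ?_ ih
    obtain ⟨e, _ | _⟩ := a
    · simp_rw [holonomy_singleton_false]
      exact (continuous_subtype_val.comp (continuous_apply e)).matrix_conjTranspose
    · simp_rw [holonomy_singleton_true]
      exact continuous_subtype_val.comp (continuous_apply e)

lemma continuous_loopTrace (w : List (E × Bool)) :
    Continuous fun U : E → Matrix.unitaryGroup (Fin N) ℂ => loopTrace U w :=
  (continuous_holonomy w).matrix_trace

lemma integrable_of_continuous [Fintype E] (μ : Measure (E → Matrix.unitaryGroup (Fin N) ℂ))
    [IsFiniteMeasure μ] {g : (E → Matrix.unitaryGroup (Fin N) ℂ) → ℂ} (hg : Continuous g) :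
    Integrable g μ :=
  hg.integrable_of_hasCompactSupport (HasCompactSupport.of_compactSpace g)

/-- Where the variation of the `k`-th letter of `w` is inserted: to the left of a positive letter
and to the right of an inverse letter. -/
def cutPos (w : List (E × Bool)) (k : Fin w.length) : ℕ := if w[k].2 then k else k + 1

/-- The part of `w` to the left of the variation of its `k`-th letter. -/
def cutLeft (w : List (E × Bool)) (k : Fin w.length) : List (E × Bool) := w.take (cutPos w k)

/-- The part of `w` to the right of the variation of its `k`-th letter. -/
def cutRight (w : List (E × Bool)) (k : Fin w.length) : List (E × Bool) := w.drop (cutPos w k)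

lemma cutLeft_append_cutRight (w : List (E × Bool)) (k : Fin w.length) :
    cutLeft w k ++ cutRight w k = w := List.take_append_drop _ _

variable [DecidableEq E]

/-- The sign of the contribution of the letter `a` to a variation of the edge `e`. -/
def letterSign (e : E) (a : E × Bool) : ℂ := if a.1 = e then (if a.2 then 1 else -1) else 0

lemma norm_letterSign_le (e : E) (a : E × Bool) : ‖letterSign e a‖ ≤ 1 := by
  unfold letterSign
  split_ifs <;> simp

/-- The variation of the holonomy along `w` when `U e` varies by `X * U e`. -/
def holonomyVar (e : E) (w : List (E × Bool)) (U : E → Matrix.unitaryGroup (Fin N) ℂ)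
    (X : Matrix (Fin N) (Fin N) ℂ) : Matrix (Fin N) (Fin N) ℂ :=
  ∑ k : Fin w.length, letterSign e w[k] • (holonomy U (cutLeft w k) * X * holonomy U (cutRight w k))

lemma holonomyVar_cons (e : E) (a : E × Bool) (w : List (E × Bool))
    (U : E → Matrix.unitaryGroup (Fin N) ℂ) (X : Matrix (Fin N) (Fin N) ℂ) :
    holonomyVar e (a :: w) U X =
      holonomyVar e [a] U X * holonomy U w + holonomy U [a] * holonomyVar e w U X := by
  have hL (k : Fin w.length) : cutLeft (a :: w) k.succ = a :: cutLeft w k := by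
    simp only [cutLeft, cutPos, Fin.val_succ, Fin.getElem_fin, List.getElem_cons_succ]
    split_ifs <;> rfl
  have hR (k : Fin w.length) : cutRight (a :: w) k.succ = cutRight w k := by
    simp only [cutRight, cutPos, Fin.val_succ, Fin.getElem_fin, List.getElem_cons_succ]
    split_ifs <;> rfl
  unfold holonomyVar
  rw [show (∑ k : Fin (a :: w).length, letterSign e (a :: w)[k] •
      (holonomy U (cutLeft (a :: w) k) * X * holonomy U (cutRight (a :: w) k))) = _ from
      Fin.sum_univ_succ (n := w.length) _]
  congr 1
  · obtain ⟨e', _ | _⟩ := a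
    · simp [cutLeft, cutRight, cutPos]
    · simp [cutLeft, cutRight, cutPos, holonomy_cons U _ w, mul_assoc]
  · rw [Finset.mul_sum]
    refine Finset.sum_congr rfl fun k _ => ?_
    rw [hL, hR, holonomy_cons U a (cutLeft w k)]
    simp [mul_assoc]

lemma holonomyVar_add (e : E) (w : List (E × Bool)) (U : E → Matrix.unitaryGroup (Fin N) ℂ)
    (X Y : Matrix (Fin N) (Fin N) ℂ) :
    holonomyVar e w U (X + Y) = holonomyVar e w U X + holonomyVar e w U Y := by
  simp [holonomyVar, mul_add, add_mul, Finset.sum_add_distrib]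

lemma holonomyVar_smul (e : E) (w : List (E × Bool)) (U : E → Matrix.unitaryGroup (Fin N) ℂ)
    (c : ℂ) (X : Matrix (Fin N) (Fin N) ℂ) :
    holonomyVar e w U (c • X) = c • holonomyVar e w U X := by
  simp [holonomyVar, Finset.smul_sum, smul_comm c]

lemma continuous_holonomyVar (e : E) (w : List (E × Bool)) (X : Matrix (Fin N) (Fin N) ℂ) :
    Continuous fun U : E → Matrix.unitaryGroup (Fin N) ℂ => holonomyVar e w U X := by
  refine continuous_finsetSum _ fun k _ => ?_
  exact Continuous.const_smul
    (((continuous_holonomy _).mul continuous_const).mul (continuous_holonomy _)) (letterSign e w[k])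

attribute [local instance] Matrix.linftyOpNormedRing Matrix.linftyOpNormedAlgebra

/-- The one-parameter subgroup of `U(N)` generated by a skew-Hermitian matrix. -/
def expUnitary (X : skewAdjoint (Matrix (Fin N) (Fin N) ℂ)) (t : ℝ) :
    Matrix.unitaryGroup (Fin N) ℂ :=
  ⟨NormedSpace.exp (t • (X : Matrix (Fin N) (Fin N) ℂ)),
    @NormedSpace.exp_mem_unitary_of_mem_skewAdjoint _ _ _ _ _
      ⟨continuous_id.matrix_conjTranspose⟩ _ (t • X).2⟩

/-- Left translation of the edge `e` by the one-parameter subgroup generated by `X`. -/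
def edgeFlow (e : E) (X : skewAdjoint (Matrix (Fin N) (Fin N) ℂ)) (t : ℝ)
    (U : E → Matrix.unitaryGroup (Fin N) ℂ) : E → Matrix.unitaryGroup (Fin N) ℂ :=
  Pi.mulSingle e (expUnitary X t) * U

lemma edgeFlow_zero (e : E) (X : skewAdjoint (Matrix (Fin N) (Fin N) ℂ))
    (U : E → Matrix.unitaryGroup (Fin N) ℂ) : edgeFlow e X 0 U = U := by
  have : expUnitary X 0 = 1 := Subtype.ext (by simp [expUnitary])
  simp [edgeFlow, this]

lemma hasDerivAt_holonomy_singleton (e : E) (X : skewAdjoint (Matrix (Fin N) (Fin N) ℂ))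
    (a : E × Bool) (U : E → Matrix.unitaryGroup (Fin N) ℂ) (t : ℝ) :
    HasDerivAt (fun s => holonomy (edgeFlow e X s U) [a])
      (holonomyVar e [a] (edgeFlow e X t U) X) t := by
  have hexp : HasDerivAt (fun s : ℝ => (expUnitary X s : Matrix (Fin N) (Fin N) ℂ))
      (X * expUnitary X t) t := hasDerivAt_exp_smul_const' _ t
  have hexp' : HasDerivAt (fun s : ℝ => (expUnitary X s : Matrix (Fin N) (Fin N) ℂ)ᴴ)
      (-((expUnitary X t : Matrix (Fin N) (Fin N) ℂ)ᴴ * X)) t := by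
    have hconj (s : ℝ) : (expUnitary X s : Matrix (Fin N) (Fin N) ℂ)ᴴ =
        NormedSpace.exp (s • (-X : Matrix (Fin N) (Fin N) ℂ)) := by
      have hX : (X : Matrix (Fin N) (Fin N) ℂ)ᴴ = -X := X.2
      simp only [expUnitary]
      rw [← Matrix.exp_conjTranspose, Matrix.conjTranspose_smul, hX]
      simp
    simp_rw [hconj]
    rw [← mul_neg]
    exact hasDerivAt_exp_smul_const (-X : Matrix (Fin N) (Fin N) ℂ) t
  obtain ⟨e', b⟩ := a
  by_cases he : e' = e
  · subst he
    cases b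
    · have hvar : holonomyVar e' [(e', false)] (edgeFlow e' X t U) X =
          (U e' : Matrix (Fin N) (Fin N) ℂ)ᴴ *
            -((expUnitary X t : Matrix (Fin N) (Fin N) ℂ)ᴴ * X) := by
        simp [holonomyVar, letterSign, cutLeft, cutRight, cutPos, holonomy_singleton_false,
          Matrix.conjTranspose_mul, mul_assoc, edgeFlow]
      rw [hvar]
      simp only [holonomy_singleton_false, edgeFlow, Pi.mul_apply, Pi.mulSingle_eq_same,
        Submonoid.coe_mul, Matrix.conjTranspose_mul]
      exact hexp'.const_mul ((U e' : Matrix (Fin N) (Fin N) ℂ)ᴴ)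
    · have hvar : holonomyVar e' [(e', true)] (edgeFlow e' X t U) X =
          X * (expUnitary X t : Matrix (Fin N) (Fin N) ℂ) * U e' := by
        simp [holonomyVar, letterSign, cutLeft, cutRight, cutPos, holonomy_singleton_true,
          mul_assoc, edgeFlow]
      rw [hvar]
      simp only [holonomy_singleton_true, edgeFlow, Pi.mul_apply, Pi.mulSingle_eq_same,
        Submonoid.coe_mul]
      exact hexp.mul_const (U e' : Matrix (Fin N) (Fin N) ℂ)
  · have hconst : (fun s => holonomy (edgeFlow e X s U) [(e', b)]) =
        fun _ => holonomy U [(e', b)] := by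
      funext s
      cases b <;> simp [holonomy_singleton_false, holonomy_singleton_true, edgeFlow, he]
    have hvar : holonomyVar e [(e', b)] (edgeFlow e X t U) X = 0 := by
      simp [holonomyVar, letterSign, he]
    rw [hconst, hvar]
    exact hasDerivAt_const t _

lemma hasDerivAt_holonomy (e : E) (X : skewAdjoint (Matrix (Fin N) (Fin N) ℂ))
    (w : List (E × Bool)) (U : E → Matrix.unitaryGroup (Fin N) ℂ) (t : ℝ) :
    HasDerivAt (fun s => holonomy (edgeFlow e X s U) w)
      (holonomyVar e w (edgeFlow e X t U) X) t := by
  induction w with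
  | nil =>
    simp only [holonomy_nil, holonomyVar, List.length_nil, Finset.univ_eq_empty, Finset.sum_empty]
    exact hasDerivAt_const t (1 : Matrix (Fin N) (Fin N) ℂ)
  | cons a w ih =>
    rw [holonomyVar_cons]
    simp_rw [holonomy_cons _ a w]
    exact (hasDerivAt_holonomy_singleton e X a U t).mul ih

lemma hasDerivAt_holonomy_apply (e : E) (X : skewAdjoint (Matrix (Fin N) (Fin N) ℂ))
    (w : List (E × Bool)) (U : E → Matrix.unitaryGroup (Fin N) ℂ) (t : ℝ) (i j : Fin N) :
    HasDerivAt (fun s => holonomy (edgeFlow e X s U) w i j)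
      (holonomyVar e w (edgeFlow e X t U) X i j) t :=
  (LinearMap.toContinuousLinearMap
    (Matrix.entryLinearMap ℝ ℂ i j)).hasFDerivAt.comp_hasDerivAt t (hasDerivAt_holonomy e X w U t)

end Loops

section Variation

variable {E : Type*} [DecidableEq E] {N : ℕ}

/-- `g' U X` is the derivative of the observable `g` when `U e` varies by `X * U e`, extended
complex-linearly from skew-Hermitian `X` to all matrices. -/
structure HasEdgeVar (e : E) (g : (E → Matrix.unitaryGroup (Fin N) ℂ) → ℂ)
    (g' : (E → Matrix.unitaryGroup (Fin N) ℂ) → Matrix (Fin N) (Fin N) ℂ → ℂ) : Prop where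
  continuous : Continuous g
  continuous_var : ∀ X, Continuous fun U => g' U X
  map_add : ∀ U X Y, g' U (X + Y) = g' U X + g' U Y
  map_smul : ∀ U (c : ℂ) X, g' U (c • X) = c * g' U X
  hasDerivAt : ∀ (X : skewAdjoint (Matrix (Fin N) (Fin N) ℂ)) U t,
    HasDerivAt (fun s => g (edgeFlow e X s U)) (g' (edgeFlow e X t U) X) t

variable {e : E} {g h : (E → Matrix.unitaryGroup (Fin N) ℂ) → ℂ}
  {g' h' : (E → Matrix.unitaryGroup (Fin N) ℂ) → Matrix (Fin N) (Fin N) ℂ → ℂ}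

lemma HasEdgeVar.const (c : ℂ) :
    HasEdgeVar e (fun _ : E → Matrix.unitaryGroup (Fin N) ℂ => c) (fun _ _ => 0) where
  continuous := continuous_const
  continuous_var _ := continuous_const
  map_add _ _ _ := by simp
  map_smul _ _ _ := by simp
  hasDerivAt _ _ t := hasDerivAt_const t c

lemma HasEdgeVar.add (hg : HasEdgeVar e g g') (hh : HasEdgeVar e h h') :
    HasEdgeVar e (fun U => g U + h U) (fun U X => g' U X + h' U X) where
  continuous := hg.continuous.add hh.continuous
  continuous_var X := (hg.continuous_var X).add (hh.continuous_var X)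
  map_add U X Y := by rw [hg.map_add, hh.map_add]; ring
  map_smul U c X := by rw [hg.map_smul, hh.map_smul]; ring
  hasDerivAt X U t := (hg.hasDerivAt X U t).add (hh.hasDerivAt X U t)

lemma HasEdgeVar.sum {ι : Type*} (s : Finset ι) {f : ι → (E → Matrix.unitaryGroup (Fin N) ℂ) → ℂ}
    {f' : ι → (E → Matrix.unitaryGroup (Fin N) ℂ) → Matrix (Fin N) (Fin N) ℂ → ℂ}
    (hf : ∀ i ∈ s, HasEdgeVar e (f i) (f' i)) :
    HasEdgeVar e (fun U => ∑ i ∈ s, f i U) (fun U X => ∑ i ∈ s, f' i U X) := by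
  classical
  induction s using Finset.induction_on with
  | empty => simpa using HasEdgeVar.const 0
  | insert a s ha ih =>
    simp only [Finset.sum_insert ha]
    exact (hf a (by simp)).add (ih fun i hi => hf i (by simp [hi]))

lemma HasEdgeVar.mul (hg : HasEdgeVar e g g') (hh : HasEdgeVar e h h') :
    HasEdgeVar e (fun U => g U * h U) (fun U X => g' U X * h U + g U * h' U X) where
  continuous := hg.continuous.mul hh.continuous
  continuous_var X :=
    ((hg.continuous_var X).mul hh.continuous).add (hg.continuous.mul (hh.continuous_var X))
  map_add U X Y := by rw [hg.map_add, hh.map_add]; ring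
  map_smul U c X := by rw [hg.map_smul, hh.map_smul]; ring
  hasDerivAt X U t := (hg.hasDerivAt X U t).mul (hh.hasDerivAt X U t)

lemma HasEdgeVar.pow (hg : HasEdgeVar e g g') (m : ℕ) :
    HasEdgeVar e (fun U => g U ^ m) (fun U X => m * g U ^ (m - 1) * g' U X) where
  continuous := hg.continuous.pow m
  continuous_var X := (continuous_const.mul (hg.continuous.pow _)).mul (hg.continuous_var X)
  map_add U X Y := by rw [hg.map_add]; ring
  map_smul U c X := by rw [hg.map_smul]; ring
  hasDerivAt X U t := (hg.hasDerivAt X U t).pow m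

lemma hasEdgeVar_holonomy_apply (e : E) (w : List (E × Bool)) (i j : Fin N) :
    HasEdgeVar e (fun U => holonomy U w i j) (fun U X => holonomyVar e w U X i j) where
  continuous := (continuous_holonomy w).matrix_elem i j
  continuous_var X := (continuous_holonomyVar e w X).matrix_elem i j
  map_add U X Y := by rw [holonomyVar_add]; rfl
  map_smul U c X := by rw [holonomyVar_smul]; rfl
  hasDerivAt X U t := hasDerivAt_holonomy_apply e X w U t i j

lemma hasEdgeVar_loopTrace (e : E) (w : List (E × Bool)) :
    HasEdgeVar e (fun U : E → Matrix.unitaryGroup (Fin N) ℂ => loopTrace U w)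
      (fun U X => (holonomyVar e w U X).trace) :=
  HasEdgeVar.sum Finset.univ fun i _ => hasEdgeVar_holonomy_apply e w i i

lemma trace_holonomyVar_holonomy (e : E) (v w : List (E × Bool))
    (U : E → Matrix.unitaryGroup (Fin N) ℂ) :
    (holonomyVar e v U (holonomy U w)).trace = ∑ k : Fin v.length,
      letterSign e v[k] * loopTrace U (cutLeft v k ++ w ++ cutRight v k) := by
  simp [holonomyVar, Matrix.trace_sum, loopTrace, holonomy_append, mul_assoc]

lemma sum_holonomyVar_single (e : E) (w : List (E × Bool))
    (U : E → Matrix.unitaryGroup (Fin N) ℂ) :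
    ∑ i, ∑ j, holonomyVar e w U (Matrix.single i j 1) i j = ∑ k : Fin w.length,
      letterSign e w[k] * (loopTrace U (cutLeft w k) * loopTrace U (cutRight w k)) := by
  have hentry (A B : Matrix (Fin N) (Fin N) ℂ) (i j : Fin N) :
      (A * (Matrix.single i j 1 : Matrix (Fin N) (Fin N) ℂ) * B) i j = A i i * B j j := by
    simp [Matrix.mul_apply, Matrix.single_apply, ite_and]
  simp only [holonomyVar, Matrix.sum_apply, Matrix.smul_apply, hentry, smul_eq_mul]
  simp only [loopTrace, Matrix.trace, Matrix.diag_apply, Finset.sum_mul_sum]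
  simp_rw [Finset.sum_comm (s := Finset.univ (α := Fin N)) (t := Finset.univ (α := Fin w.length)),
    Finset.mul_sum]

variable [Fintype E]

variable {μ : Measure (E → Matrix.unitaryGroup (Fin N) ℂ)} [IsFiniteMeasure μ]
  [μ.IsMulLeftInvariant]

lemma HasEdgeVar.integral_skewAdjoint_eq_zero (hg : HasEdgeVar e g g')
    (X : skewAdjoint (Matrix (Fin N) (Fin N) ℂ)) : ∫ U, g' U X ∂μ = 0 := by
  obtain ⟨C, hC⟩ := (isCompact_range (hg.continuous_var X)).isBounded.exists_norm_le
  have hcont (t : ℝ) : Continuous (edgeFlow e X t) := continuous_const.mul continuous_id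
  have hderiv := (hasDerivAt_integral_of_dominated_loc_of_deriv_le (μ := μ) (x₀ := (0 : ℝ))
    (F := fun t U => g (edgeFlow e X t U)) (F' := fun t U => g' (edgeFlow e X t U) X)
    (bound := fun _ => C) (s := Set.univ) Filter.univ_mem
    (Eventually.of_forall fun t =>
      (integrable_of_continuous μ (hg.continuous.comp (hcont t))).aestronglyMeasurable)
    (integrable_of_continuous μ (hg.continuous.comp (hcont 0)))
    (integrable_of_continuous μ ((hg.continuous_var X).comp (hcont 0))).aestronglyMeasurable
    (Eventually.of_forall fun U t _ => hC _ ⟨_, rfl⟩) (integrable_const C)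
    (Eventually.of_forall fun U t _ => hg.hasDerivAt X U t)).2
  have hconst : (fun t => ∫ U, g (edgeFlow e X t U) ∂μ) = fun _ => ∫ U, g U ∂μ := by
    funext t
    exact integral_mul_left_eq_self (μ := μ) g (Pi.mulSingle e (expUnitary X t))
  simp only [hconst, edgeFlow_zero] at hderiv
  exact hderiv.unique (hasDerivAt_const 0 _)

/-- Integration by parts for an invariant measure. -/
lemma HasEdgeVar.integral_eq_zero (hg : HasEdgeVar e g g') (X : Matrix (Fin N) (Fin N) ℂ) :
    ∫ U, g' U X ∂μ = 0 := by
  have hA : X - Xᴴ ∈ skewAdjoint (Matrix (Fin N) (Fin N) ℂ) := by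
    simp [skewAdjoint.mem_iff, Matrix.star_eq_conjTranspose]
  have hB : Complex.I • (X + Xᴴ) ∈ skewAdjoint (Matrix (Fin N) (Fin N) ℂ) := by
    simp [skewAdjoint.mem_iff, Matrix.star_eq_conjTranspose, add_comm]
  have hX : X = (1 / 2 : ℂ) • (X - Xᴴ) + (-Complex.I / 2) • (Complex.I • (X + Xᴴ)) := by
    rw [smul_smul, show -Complex.I / 2 * Complex.I = 1 / 2 by
      linear_combination (-1 / 2 : ℂ) * Complex.I_mul_I]
    module
  have hU (U) : g' U X = (1 / 2 : ℂ) * g' U (X - Xᴴ) +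
      (-Complex.I / 2) * g' U (Complex.I • (X + Xᴴ)) := by
    conv_lhs => rw [hX]
    rw [hg.map_add, hg.map_smul, hg.map_smul _ (-Complex.I / 2)]
  simp_rw [hU]
  rw [integral_add, integral_const_mul, integral_const_mul,
    hg.integral_skewAdjoint_eq_zero ⟨_, hA⟩, hg.integral_skewAdjoint_eq_zero ⟨_, hB⟩]
  · simp
  · exact (integrable_of_continuous μ (hg.continuous_var _)).const_mul _
  · exact (integrable_of_continuous μ (hg.continuous_var _)).const_mul _

/-- The Schwinger–Dyson (loop) equation. -/
lemma HasEdgeVar.schwingerDyson (hh : HasEdgeVar e h h') (w : List (E × Bool)) :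
    ∑ k : Fin w.length, letterSign e w[k] *
        ∫ U, loopTrace U (cutLeft w k) * loopTrace U (cutRight w k) * h U ∂μ +
      ∫ U, h' U (holonomy U w) ∂μ = 0 := by
  have hsplit (U : E → Matrix.unitaryGroup (Fin N) ℂ) :
      h' U (holonomy U w) = ∑ i, ∑ j, holonomy U w i j * h' U (Matrix.single i j 1) := by
    have hlin : h' U = (⟨⟨h' U, hh.map_add U⟩, hh.map_smul U⟩ :
        Matrix (Fin N) (Fin N) ℂ →ₗ[ℂ] ℂ) := rfl
    conv_lhs => rw [Matrix.matrix_eq_sum_single (holonomy U w), hlin]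
    simp only [_root_.map_sum]
    refine Finset.sum_congr rfl fun i _ => Finset.sum_congr rfl fun j _ => ?_
    rw [← mul_one (holonomy U w i j), ← smul_eq_mul, ← Matrix.smul_single, LinearMap.map_smul]
    simp
  have hzero (i j : Fin N) := ((hasEdgeVar_holonomy_apply e w i j).mul hh).integral_eq_zero
    (μ := μ) (Matrix.single i j 1)
  have hcont1 (i j : Fin N) : Continuous fun U : E → Matrix.unitaryGroup (Fin N) ℂ =>
      holonomyVar e w U (Matrix.single i j 1) i j * h U :=
    ((hasEdgeVar_holonomy_apply e w i j).continuous_var _).mul hh.continuous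
  have hcont2 (i j : Fin N) : Continuous fun U : E → Matrix.unitaryGroup (Fin N) ℂ =>
      holonomy U w i j * h' U (Matrix.single i j 1) :=
    (hasEdgeVar_holonomy_apply e w i j).continuous.mul (hh.continuous_var _)
  have hcont3 (k : Fin w.length) : Continuous fun U : E → Matrix.unitaryGroup (Fin N) ℂ =>
      letterSign e w[k] * (loopTrace U (cutLeft w k) * loopTrace U (cutRight w k) * h U) :=
    continuous_const.mul
      (((continuous_loopTrace _).mul (continuous_loopTrace _)).mul hh.continuous)
  calc _ = ∫ U, ∑ i, ∑ j, (holonomyVar e w U (Matrix.single i j 1) i j * h U) ∂μ +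
        ∫ U, ∑ i, ∑ j, holonomy U w i j * h' U (Matrix.single i j 1) ∂μ := by
        simp_rw [← integral_const_mul, hsplit]
        rw [← integral_finsetSum _ fun k _ => integrable_of_continuous μ (hcont3 k)]
        congr 2
        funext U
        simp_rw [← Finset.sum_mul, sum_holonomyVar_single, Finset.sum_mul, mul_assoc]
    _ = ∑ i, ∑ j, ∫ U, (holonomyVar e w U (Matrix.single i j 1) i j * h U +
        holonomy U w i j * h' U (Matrix.single i j 1)) ∂μ := by
        rw [← integral_add]
        · simp_rw [← Finset.sum_add_distrib]
          rw [integral_finsetSum]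
          · refine Finset.sum_congr rfl fun i _ => integral_finsetSum _ fun j _ => ?_
            exact integrable_of_continuous μ ((hcont1 i j).add (hcont2 i j))
          · exact fun i _ => integrable_of_continuous μ
              (continuous_finsetSum _ fun j _ => (hcont1 i j).add (hcont2 i j))
        · exact integrable_of_continuous μ
            (continuous_finsetSum _ fun i _ => continuous_finsetSum _ fun j _ => hcont1 i j)
        · exact integrable_of_continuous μ
            (continuous_finsetSum _ fun i _ => continuous_finsetSum _ fun j _ => hcont2 i j)
    _ = 0 := by simp [hzero]

end Variation

section LoopProducts

variable {E : Type*} {N : ℕ}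

lemma loopTrace_congr (U : E → Matrix.unitaryGroup (Fin N) ℂ) {v w : List (E × Bool)}
    (h : FreeGroup.mk v = FreeGroup.mk w) : loopTrace U v = loopTrace U w := by
  simp [loopTrace, holonomy, h]

lemma loopTrace_append_comm (U : E → Matrix.unitaryGroup (Fin N) ℂ) (v w : List (E × Bool)) :
    loopTrace U (v ++ w) = loopTrace U (w ++ v) := by
  rw [loopTrace, loopTrace, holonomy_append, holonomy_append, Matrix.trace_mul_comm]

@[simp]
lemma loopTrace_nil (U : E → Matrix.unitaryGroup (Fin N) ℂ) : loopTrace U [] = N := by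
  simp [loopTrace]

lemma loopTrace_of_mk_eq_one (U : E → Matrix.unitaryGroup (Fin N) ℂ) {w : List (E × Bool)}
    (h : FreeGroup.mk w = 1) : loopTrace U w = N := by
  rw [loopTrace_congr U (h.trans FreeGroup.one_eq_mk), loopTrace_nil]

lemma norm_loopTrace_le (U : E → Matrix.unitaryGroup (Fin N) ℂ) (w : List (E × Bool)) :
    ‖loopTrace U w‖ ≤ N := by
  refine (norm_sum_le_of_le Finset.univ (f := fun i => (holonomy U w).diag i) (n := fun _ => 1)
    fun i _ => ?_).trans (by simp)
  exact entry_norm_bound_of_unitary (FreeGroup.lift U (FreeGroup.mk w)).2 i i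

lemma mk_ne_one_of_isReduced {w : List (E × Bool)} (hw : FreeGroup.IsReduced w) (h : w ≠ []) :
    FreeGroup.mk w ≠ 1 := by
  classical
  intro h1
  have := congrArg FreeGroup.toWord h1
  rw [FreeGroup.toWord_mk, hw.reduce_eq, FreeGroup.toWord_one] at this
  exact h this

/-- Every nontrivial word is conjugate to a cyclically reduced one which is not longer. -/
lemma exists_isCyclicallyReduced {w : List (E × Bool)} (hw : FreeGroup.mk w ≠ 1) :
    ∃ v : List (E × Bool), FreeGroup.IsCyclicallyReduced v ∧ v ≠ [] ∧ v.length ≤ w.length ∧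
      ∀ (N : ℕ) (U : E → Matrix.unitaryGroup (Fin N) ℂ), loopTrace U w = loopTrace U v := by
  classical
  set r := FreeGroup.reduce w with hr
  set v := FreeGroup.reduceCyclically r with hv
  set c := FreeGroup.reduceCyclically.conjugator r with hc
  have hconj : c ++ v ++ FreeGroup.invRev c = r :=
    FreeGroup.reduceCyclically.conj_conjugator_reduceCyclically r
  have hmk : FreeGroup.mk w = FreeGroup.mk c * FreeGroup.mk v * (FreeGroup.mk c)⁻¹ := by
    rw [FreeGroup.inv_mk, FreeGroup.mul_mk, FreeGroup.mul_mk, hconj, hr]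
    exact FreeGroup.reduce.self.symm
  refine ⟨v, FreeGroup.reduceCyclically.isCyclicallyReduced
    (FreeGroup.isReduced_iff_reduce_eq.2 FreeGroup.reduce.idem), ?_, ?_, ?_⟩
  · intro h
    apply hw
    rw [hmk, h, ← FreeGroup.one_eq_mk, mul_one, mul_inv_cancel]
  · calc v.length ≤ r.length := by rw [← hconj]; simp; omega
      _ ≤ w.length := FreeGroup.Red.length_le FreeGroup.reduce.red
  · intro N U
    rw [loopTrace_congr U (w := c ++ v ++ FreeGroup.invRev c) (by rw [hmk]; simp),
      List.append_assoc, loopTrace_append_comm]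
    refine loopTrace_congr U ?_
    simp [← FreeGroup.mul_mk, ← FreeGroup.inv_mk]

/-- The product of the Wilson loops of a list of words. -/
def loopProd (U : E → Matrix.unitaryGroup (Fin N) ℂ) (ws : List (List (E × Bool))) : ℂ :=
  (ws.map (loopTrace U)).prod

@[simp]
lemma loopProd_nil (U : E → Matrix.unitaryGroup (Fin N) ℂ) : loopProd U [] = 1 := rfl

@[simp]
lemma loopProd_cons (U : E → Matrix.unitaryGroup (Fin N) ℂ) (w : List (E × Bool))
    (ws : List (List (E × Bool))) : loopProd U (w :: ws) = loopTrace U w * loopProd U ws := by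
  simp [loopProd]

lemma continuous_loopProd (ws : List (List (E × Bool))) :
    Continuous fun U : E → Matrix.unitaryGroup (Fin N) ℂ => loopProd U ws := by
  induction ws with
  | nil => simpa using continuous_const
  | cons w ws ih =>
    simp_rw [loopProd_cons]
    exact (continuous_loopTrace w).mul ih

lemma norm_loopProd_le (U : E → Matrix.unitaryGroup (Fin N) ℂ) (ws : List (List (E × Bool))) :
    ‖loopProd U ws‖ ≤ (N : ℝ) ^ ws.length := by
  induction ws with
  | nil => simp
  | cons w ws ih =>
    rw [loopProd_cons, norm_mul, List.length_cons, pow_succ']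
    exact mul_le_mul (norm_loopTrace_le U w) ih (norm_nonneg _) (Nat.cast_nonneg _)

/-- The lists of nontrivial words of total length at most `n`. -/
def shortLoops (E : Type*) (n : ℕ) : Set (List (List (E × Bool))) :=
  {ws | (∀ w ∈ ws, FreeGroup.mk w ≠ 1) ∧ (ws.map List.length).sum ≤ n}

lemma length_le_of_mem_shortLoops {n : ℕ} {ws : List (List (E × Bool))}
    (h : ws ∈ shortLoops E n) : ws.length ≤ n := by
  refine le_trans ?_ h.2
  have hone : ∀ l ∈ ws.map List.length, 1 ≤ l := by
    intro l hl
    obtain ⟨w, hw, rfl⟩ := List.mem_map.1 hl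
    refine Nat.one_le_iff_ne_zero.2 fun h0 => h.1 w hw ?_
    rw [List.length_eq_zero_iff.1 h0, FreeGroup.one_eq_mk]
  simpa using List.card_nsmul_le_sum _ _ hone

lemma hasEdgeVar_loopProd [DecidableEq E] (e : E) (ws : List (List (E × Bool))) :
    HasEdgeVar e (fun U : E → Matrix.unitaryGroup (Fin N) ℂ => loopProd U ws)
      (fun U X => ∑ j : Fin ws.length,
        (holonomyVar e ws[j] U X).trace * loopProd U (ws.eraseIdx j)) := by
  induction ws with
  | nil => simpa using HasEdgeVar.const 1
  | cons w ws ih =>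
    convert (hasEdgeVar_loopTrace e w).mul ih using 1
    · funext U
      simp
    · funext U X
      refine (Fin.sum_univ_succ (n := ws.length) _).trans ?_
      simp only [Fin.getElem_fin, Fin.val_zero, List.getElem_cons_zero, List.eraseIdx_cons_zero,
        Fin.val_succ, List.getElem_cons_succ, List.eraseIdx_cons_succ, loopProd_cons,
        Finset.mul_sum]
      congr 1
      exact Finset.sum_congr rfl fun j _ => by ring

variable {μ : Measure (E → Matrix.unitaryGroup (Fin N) ℂ)} [IsProbabilityMeasure μ]

lemma norm_integral_loopProd_le (ws : List (List (E × Bool))) :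
    ‖∫ U, loopProd U ws ∂μ‖ ≤ (N : ℝ) ^ ws.length := by
  simpa using norm_integral_le_of_norm_le_const (μ := μ)
    (Eventually.of_forall fun U => norm_loopProd_le U ws)

lemma norm_integral_loopProd_le_of_cut [Fintype E] [DecidableEq E] [μ.IsMulLeftInvariant]
    {n : ℕ} {C M : ℝ}
    (hC : ∀ ws ∈ shortLoops E n, ‖∫ U, loopProd U ws ∂μ‖ ≤ C)
    (hM : ∀ ws ∈ shortLoops E (n + 1), ‖∫ U, loopProd U ws ∂μ‖ ≤ M)
    {w : List (E × Bool)} {ws : List (List (E × Bool))} (hws : w :: ws ∈ shortLoops E (n + 1))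
    (e : E) (k₀ : Fin w.length) (hsign : ‖letterSign e w[k₀]‖ = 1)
    (hcut : cutLeft w k₀ = [] ∨ cutRight w k₀ = [])
    (hsplit : ∀ k ≠ k₀, letterSign e w[k] ≠ 0 →
      FreeGroup.mk (cutLeft w k) ≠ 1 ∧ FreeGroup.mk (cutRight w k) ≠ 1) :
    N * ‖∫ U, loopProd U (w :: ws) ∂μ‖ ≤ (n + 1) * (M + N * C) := by
  have hmem : (∀ v ∈ ws, FreeGroup.mk v ≠ 1) ∧ w.length + (ws.map List.length).sum ≤ n + 1 := by
    simpa using And.intro (fun v hv => hws.1 v (List.mem_cons_of_mem _ hv)) hws.2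
  have hwpos : 0 < w.length := k₀.pos
  have hC0 : 0 ≤ C := (norm_nonneg _).trans (hC [] (by simp [shortLoops]))
  have hM0 : 0 ≤ M := (norm_nonneg _).trans (hM [] (by simp [shortLoops]))
  have hB : 0 ≤ M + N * C := by positivity
  have hSD := (hasEdgeVar_loopProd e ws).schwingerDyson (μ := μ) w
  have hmerge : ∫ U, ∑ j : Fin ws.length,
        (holonomyVar e ws[j] U (holonomy U w)).trace * loopProd U (ws.eraseIdx j) ∂μ =
      ∑ j : Fin ws.length, ∑ k : Fin ws[j].length, letterSign e ws[j][k] *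
        ∫ U, loopProd U ((cutLeft ws[j] k ++ w ++ cutRight ws[j] k) :: ws.eraseIdx j) ∂μ := by
    have hc (j : Fin ws.length) (k : Fin ws[j].length) :
        Continuous fun U : E → Matrix.unitaryGroup (Fin N) ℂ => letterSign e ws[j][k] *
          loopProd U ((cutLeft ws[j] k ++ w ++ cutRight ws[j] k) :: ws.eraseIdx j) :=
      continuous_const.mul (continuous_loopProd _)
    simp_rw [trace_holonomyVar_holonomy, Finset.sum_mul, mul_assoc, ← loopProd_cons]
    rw [integral_finsetSum _ fun j _ => integrable_of_continuous μ
      (continuous_finsetSum _ fun k _ => hc j k)]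
    refine Finset.sum_congr rfl fun j _ => ?_
    rw [integral_finsetSum _ fun k _ => integrable_of_continuous μ (hc j k)]
    simp_rw [integral_const_mul]
  rw [hmerge, ← Finset.add_sum_erase _ _ (Finset.mem_univ k₀)] at hSD
  have hmain : ‖letterSign e w[k₀] *
      ∫ U, loopTrace U (cutLeft w k₀) * loopTrace U (cutRight w k₀) * loopProd U ws ∂μ‖ =
      N * ‖∫ U, loopProd U (w :: ws) ∂μ‖ := by
    have happ := cutLeft_append_cutRight w k₀
    rw [norm_mul, hsign, one_mul]
    rcases hcut with h | h
    · rw [h, List.nil_append] at happ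
      simp [h, happ, mul_assoc, integral_const_mul]
    · rw [h, List.append_nil] at happ
      simp [h, happ, mul_comm _ (N : ℂ), mul_assoc, integral_const_mul]
  have hs : ‖∑ k ∈ Finset.univ.erase k₀, letterSign e w[k] *
      ∫ U, loopTrace U (cutLeft w k) * loopTrace U (cutRight w k) * loopProd U ws ∂μ‖ ≤
      w.length * (M + N * C) := by
    refine (norm_sum_le_of_le (n := fun _ => M + N * C) _ fun k hk => ?_).trans ?_
    · by_cases h0 : letterSign e w[k] = 0
      · rwa [h0, zero_mul, norm_zero]
      obtain ⟨hl, hr⟩ := hsplit k (Finset.ne_of_mem_erase hk) h0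
      rw [norm_mul]
      refine (mul_le_of_le_one_left (norm_nonneg _) (norm_letterSign_le _ _)).trans ?_
      have := hM (cutLeft w k :: cutRight w k :: ws) ⟨by simpa [hl, hr] using hmem.1, by
        have := congrArg List.length (cutLeft_append_cutRight w k)
        rw [List.length_append] at this
        simp only [List.map_cons, List.sum_cons]
        omega⟩
      simp only [loopProd_cons, ← mul_assoc] at this
      exact this.trans (by simpa using mul_nonneg (Nat.cast_nonneg N) hC0)
    · rw [Finset.sum_const, nsmul_eq_mul]
      gcongr
      exact (Finset.card_erase_le).trans (by simp)
  have hm : ‖∑ j : Fin ws.length, ∑ k : Fin ws[j].length, letterSign e ws[j][k] *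
      ∫ U, loopProd U ((cutLeft ws[j] k ++ w ++ cutRight ws[j] k) :: ws.eraseIdx j) ∂μ‖ ≤
      (ws.map List.length).sum * (M + N * C) := by
    have hlen : ((ws.map List.length).sum : ℝ) = ∑ j : Fin ws.length, (ws[j].length : ℝ) := by
      rw [← Nat.cast_sum]
      congr 1
      simp
    rw [hlen, Finset.sum_mul]
    refine norm_sum_le_of_le _ fun j _ => ?_
    refine (norm_sum_le_of_le (n := fun _ => M + N * C) _ fun k _ => ?_).trans
      (by rw [Finset.sum_const, nsmul_eq_mul, Finset.card_univ, Fintype.card_fin])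
    rw [norm_mul]
    refine (mul_le_of_le_one_left (norm_nonneg _) (norm_letterSign_le _ _)).trans ?_
    have hsub : ∀ v ∈ ws.eraseIdx j, FreeGroup.mk v ≠ 1 :=
      fun v hv => hmem.1 v (List.mem_of_mem_eraseIdx hv)
    have hperm : ws[j].length + ((ws.eraseIdx j).map List.length).sum =
        (ws.map List.length).sum := by
      simpa using ((List.getElem_cons_eraseIdx_perm j.2).map List.length).sum_eq
    have hlj := congrArg List.length (cutLeft_append_cutRight ws[j] k)
    rw [List.length_append] at hlj
    by_cases h1 : FreeGroup.mk (cutLeft ws[j] k ++ w ++ cutRight ws[j] k) = 1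
    · simp only [loopProd_cons, loopTrace_of_mk_eq_one _ h1, integral_const_mul, norm_mul,
        Complex.norm_natCast]
      refine le_add_of_nonneg_of_le hM0 ?_
      gcongr
      exact hC _ ⟨hsub, by omega⟩
    · refine (hM _ ⟨?_, ?_⟩).trans (by simpa using mul_nonneg (Nat.cast_nonneg N) hC0)
      · simpa only [List.forall_mem_cons] using ⟨h1, hsub⟩
      · simp only [List.map_cons, List.sum_cons, List.length_append]
        omega
  have hfin : N * ‖∫ U, loopProd U (w :: ws) ∂μ‖ ≤
      w.length * (M + N * C) + (ws.map List.length).sum * (M + N * C) := by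
    rw [← hmain, eq_neg_of_add_eq_zero_left ((add_assoc _ _ _).symm.trans hSD), norm_neg]
    exact (norm_add_le _ _).trans (add_le_add hs hm)
  refine hfin.trans ?_
  rw [← add_mul]
  exact mul_le_mul_of_nonneg_right (by exact_mod_cast hmem.2) hB

end LoopProducts

section LoopBounds

variable {E : Type*}

lemma FreeGroup.IsCyclicallyReduced.snd_eq {w : List (E × Bool)}
    (hw : FreeGroup.IsCyclicallyReduced w) {i j : ℕ} (hi : i + 1 = w.length) (hj : j < w.length)
    (hj0 : j = 0) (h : w[i].1 = w[j].1) : w[i].2 = w[j].2 := by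
  subst hj0
  refine hw.2 _ ?_ _ ?_ h
  · have : i = w.length - 1 := by omega
    subst this
    simp [List.getLast?_eq_getElem?]
  · simp [List.head?_eq_getElem?]

lemma mk_cut_ne_one {w : List (E × Bool)} (hw : FreeGroup.IsReduced w) (k : Fin w.length)
    (h0 : 0 < cutPos w k) (h1 : cutPos w k < w.length) :
    FreeGroup.mk (cutLeft w k) ≠ 1 ∧ FreeGroup.mk (cutRight w k) ≠ 1 := by
  constructor
  · refine mk_ne_one_of_isReduced (hw.infix (List.take_prefix _ _).isInfix) fun h => ?_
    have := congrArg List.length h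
    simp only [cutLeft, List.length_take, List.length_nil] at this
    omega
  · refine mk_ne_one_of_isReduced (hw.infix (List.drop_suffix _ _).isInfix) fun h => ?_
    have := congrArg List.length h
    simp only [cutRight, List.length_drop, List.length_nil] at this
    omega

lemma mk_cut_ne_one_of_cons_true [DecidableEq E] {e : E} {w : List (E × Bool)}
    (hw : FreeGroup.IsCyclicallyReduced ((e, true) :: w)) (k : Fin ((e, true) :: w).length)
    (hk : k ≠ ⟨0, by simp⟩) (hs : letterSign e ((e, true) :: w)[k] ≠ 0) :
    FreeGroup.mk (cutLeft ((e, true) :: w) k) ≠ 1 ∧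
      FreeGroup.mk (cutRight ((e, true) :: w) k) ≠ 1 := by
  have hk0 : (k : ℕ) ≠ 0 := fun h => hk (Fin.ext h)
  have he : ((e, true) :: w)[k].1 = e := by
    by_contra h
    exact hs (if_neg h)
  refine mk_cut_ne_one hw.isReduced k ?_ ?_
  · unfold cutPos
    split_ifs <;> omega
  · unfold cutPos
    split_ifs with h2
    · exact k.2
    · refine lt_of_le_of_ne k.2 fun hlast => h2 ?_
      exact hw.snd_eq (j := 0) hlast (by simp) rfl he

lemma mk_cut_ne_one_of_append_false [DecidableEq E] {e : E} {w : List (E × Bool)}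
    (hw : FreeGroup.IsCyclicallyReduced (w ++ [(e, false)]))
    (k : Fin (w ++ [(e, false)]).length)
    (hk : k ≠ ⟨w.length, by simp⟩) (hs : letterSign e (w ++ [(e, false)])[k] ≠ 0) :
    FreeGroup.mk (cutLeft (w ++ [(e, false)]) k) ≠ 1 ∧
      FreeGroup.mk (cutRight (w ++ [(e, false)]) k) ≠ 1 := by
  have hklt : (k : ℕ) < w.length := by
    have h1 := k.2
    have h2 : (k : ℕ) ≠ w.length := fun h => hk (Fin.ext h)
    simp only [List.length_append, List.length_singleton] at h1
    omega
  have he : (w ++ [(e, false)])[k].1 = e := by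
    by_contra h
    exact hs (if_neg h)
  refine mk_cut_ne_one hw.isReduced k ?_ ?_
  · unfold cutPos
    split_ifs with h2
    · refine Nat.pos_of_ne_zero fun h0 => ?_
      have := hw.snd_eq (i := w.length) (j := k) (by simp) k.2 h0 (by simpa using he.symm)
      simp only [Fin.getElem_fin] at h2
      simp [h2] at this
    · omega
  · unfold cutPos
    simp only [List.length_append, List.length_singleton]
    split_ifs <;> omega

lemma FreeGroup.IsCyclicallyReduced.rotate_cons {a : E × Bool} {w : List (E × Bool)}
    (h : FreeGroup.IsCyclicallyReduced (a :: w)) : FreeGroup.IsCyclicallyReduced (w ++ [a]) := by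
  rcases List.eq_nil_or_concat w with rfl | ⟨v, b, rfl⟩
  · simp
  · obtain ⟨hred, hcyc⟩ := h
    have hba : b.1 = a.1 → b.2 = a.2 := by
      refine hcyc b ?_ a (by simp)
      rw [List.concat_eq_append, ← List.cons_append, List.getLast?_append]
      simp
    have hv : FreeGroup.IsReduced (v ++ [b]) := hred.infix ⟨[a], [], by simp⟩
    refine ⟨?_, ?_⟩
    · have := FreeGroup.IsReduced.append_overlap (L₃ := [a]) hv (by simpa using hba) (by simp)
      simpa using this
    · intro x hx y hy hxy
      simp only [List.concat_eq_append, List.getLast?_append, List.getLast?_singleton,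
        Option.some_or, Option.mem_def, Option.some.injEq] at hx
      subst hx
      cases v with
      | nil =>
        simp at hy
        subst hy
        exact (hba hxy.symm).symm
      | cons c v =>
        simp at hy
        subst hy
        exact (FreeGroup.isReduced_cons_cons.1 hred).1 hxy

lemma continuous_sum_loopTrace {ι : Type*} [Fintype ι] (p : ι → List (E × Bool)) (N : ℕ) :
    Continuous fun U : E → Matrix.unitaryGroup (Fin N) ℂ => ∑ i, loopTrace U (p i) :=
  continuous_finsetSum _ fun i _ => continuous_loopTrace (p i)

variable [Fintype E] [DecidableEq E]

lemma norm_integral_loopProd_le_of_bounds {N : ℕ} {μ : Measure (E → Matrix.unitaryGroup (Fin N) ℂ)}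
    [IsProbabilityMeasure μ] [μ.IsMulLeftInvariant] {n : ℕ} {C M : ℝ}
    (hC : ∀ ws ∈ shortLoops E n, ‖∫ U, loopProd U ws ∂μ‖ ≤ C)
    (hM : ∀ ws ∈ shortLoops E (n + 1), ‖∫ U, loopProd U ws ∂μ‖ ≤ M)
    {ws : List (List (E × Bool))} (hws : ws ∈ shortLoops E (n + 1)) :
    N * ‖∫ U, loopProd U ws ∂μ‖ ≤ (n + 1) * (M + N * C) := by
  have hC1 : 1 ≤ C := by simpa using hC [] (by simp [shortLoops])
  have hM1 : 1 ≤ M := by simpa using hM [] (by simp [shortLoops])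
  cases ws with
  | nil =>
    simp only [loopProd_nil, integral_const, probReal_univ, one_smul, norm_one, mul_one]
    have hN : (0 : ℝ) ≤ N := Nat.cast_nonneg N
    have hn : (0 : ℝ) ≤ n := Nat.cast_nonneg n
    nlinarith [mul_le_mul_of_nonneg_left hC1 hN, mul_nonneg hn (by positivity : 0 ≤ M + N * C)]
  | cons w ws =>
    obtain ⟨v, hv, hv0, hvlen, htr⟩ := exists_isCyclicallyReduced (hws.1 w (by simp))
    have hmem (v' : List (E × Bool)) (hred : FreeGroup.IsCyclicallyReduced v') (hne : v' ≠ [])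
        (hlen : v'.length ≤ w.length) : v' :: ws ∈ shortLoops E (n + 1) := by
      refine ⟨?_, ?_⟩
      · rw [List.forall_mem_cons]
        exact ⟨mk_ne_one_of_isReduced hred.isReduced hne,
          fun u hu => hws.1 u (List.mem_cons_of_mem _ hu)⟩
      · have := hws.2
        simp only [List.map_cons, List.sum_cons] at this ⊢
        omega
    obtain ⟨⟨e, b⟩, A, rfl⟩ := List.exists_cons_of_ne_nil hv0
    cases b with
    | true =>
      have := norm_integral_loopProd_le_of_cut hC hM (hmem _ hv hv0 hvlen) e ⟨0, by simp⟩
        (by simp [letterSign]) (Or.inl (by simp [cutLeft, cutPos]))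
        (mk_cut_ne_one_of_cons_true hv)
      simpa only [loopProd_cons, htr] using this
    | false =>
      have hrot := hv.rotate_cons
      have := norm_integral_loopProd_le_of_cut hC hM
        (hmem _ hrot (by simp) (by simpa using hvlen)) e ⟨A.length, by simp⟩
        (by simp [letterSign]) (Or.inr (by simp [cutRight, cutPos]))
        (mk_cut_ne_one_of_append_false hrot)
      simpa only [loopProd_cons, htr, loopTrace_append_comm _ A,
        List.singleton_append] using this

variable {μ : ∀ N : ℕ, Measure (E → Matrix.unitaryGroup (Fin N) ℂ)}
  [∀ N, IsProbabilityMeasure (μ N)] [∀ N, (μ N).IsMulLeftInvariant]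

/-- Expectations of products of nontrivial Wilson loops are bounded uniformly in `N`. -/
lemma exists_norm_integral_loopProd_le (n : ℕ) :
    ∃ C : ℝ, ∃ N₀ : ℕ, ∀ N ≥ N₀, ∀ ws ∈ shortLoops E n, ‖∫ U, loopProd U ws ∂(μ N)‖ ≤ C := by
  induction n with
  | zero =>
    refine ⟨1, 0, fun N _ ws hws => ?_⟩
    rw [List.length_eq_zero_iff.1 (Nat.le_zero.1 (length_le_of_mem_shortLoops hws))]
    simp
  | succ n ih =>
    obtain ⟨C, N₀, hC⟩ := ih
    refine ⟨2 * (n + 1) * C, max N₀ (2 * (n + 1)), fun N hN => ?_⟩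
    have hNn : (2 * (n + 1) : ℝ) ≤ N := by exact_mod_cast (le_max_right _ _).trans hN
    have hn : (0 : ℝ) ≤ n := Nat.cast_nonneg n
    have hN1 : (1 : ℝ) ≤ N := by linarith
    set S : Set ℝ := (fun ws => ‖∫ U, loopProd U ws ∂(μ N)‖) '' shortLoops E (n + 1) with hS
    have hbdd : BddAbove S := by
      refine ⟨(N : ℝ) ^ (n + 1), ?_⟩
      rintro _ ⟨ws, hws, rfl⟩
      exact (norm_integral_loopProd_le ws).trans
        (pow_le_pow_right₀ hN1 (length_le_of_mem_shortLoops hws))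
    have hne : S.Nonempty := ⟨_, [], by simp [shortLoops], rfl⟩
    have hM (ws) (hws : ws ∈ shortLoops E (n + 1)) : ‖∫ U, loopProd U ws ∂(μ N)‖ ≤ sSup S :=
      le_csSup hbdd ⟨ws, hws, rfl⟩
    have hM0 : 0 ≤ sSup S := (norm_nonneg _).trans (hM [] (by simp [shortLoops]))
    have hhalf : sSup S ≤ sSup S / 2 + (n + 1) * C := by
      refine csSup_le hne ?_
      rintro _ ⟨ws, hws, rfl⟩
      have := norm_integral_loopProd_le_of_bounds (hC N ((le_max_left _ _).trans hN)) hM hws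
      refine le_of_mul_le_mul_left (this.trans ?_) (by linarith : (0 : ℝ) < N)
      nlinarith
    exact fun ws hws => (hM ws hws).trans (by linarith)

lemma isBigO_integral_loopProd {ws : List (List (E × Bool))} (hws : ∀ w ∈ ws, FreeGroup.mk w ≠ 1) :
    (fun N => ∫ U, loopProd U ws ∂(μ N)) =O[atTop] (fun _ => (1 : ℝ)) := by
  obtain ⟨C, N₀, hC⟩ := exists_norm_integral_loopProd_le (μ := μ) (ws.map List.length).sum
  refine Asymptotics.IsBigO.of_bound C ((eventually_ge_atTop N₀).mono fun N hN => ?_)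
  simpa using hC N hN ws ⟨hws, le_rfl⟩

variable {ι : Type*} [Fintype ι] {p : ι → List (E × Bool)}

lemma isBigO_integral_loopProd_mul_pow (hp : ∀ i, FreeGroup.mk (p i) ≠ 1) (m : ℕ)
    {ws : List (List (E × Bool))} (hws : ∀ w ∈ ws, FreeGroup.mk w ≠ 1) :
    (fun N => ∫ U, loopProd U ws * (∑ i, loopTrace U (p i)) ^ m ∂(μ N)) =O[atTop]
      (fun _ => (1 : ℝ)) := by
  induction m generalizing ws with
  | zero => simpa using isBigO_integral_loopProd hws
  | succ m ih =>
    have hsum (N : ℕ) : ∫ U, loopProd U ws * (∑ i, loopTrace U (p i)) ^ (m + 1) ∂(μ N) =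
        ∑ i, ∫ U, loopProd U (p i :: ws) * (∑ i, loopTrace U (p i)) ^ m ∂(μ N) := by
      have hc (i : ι) : Continuous fun U : E → Matrix.unitaryGroup (Fin N) ℂ =>
          loopProd U (p i :: ws) * (∑ i, loopTrace U (p i)) ^ m :=
        (continuous_loopProd (p i :: ws)).mul ((continuous_sum_loopTrace p N).pow m)
      rw [← integral_finsetSum _ fun i _ => integrable_of_continuous (μ N) (hc i)]
      congr 1
      funext U
      simp_rw [loopProd_cons, mul_assoc, ← Finset.sum_mul]
      ring
    simp_rw [hsum]
    refine Asymptotics.IsBigO.fun_sum fun i _ => ih ?_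
    rw [List.forall_mem_cons]
    exact ⟨hp i, hws⟩

/-- The leading order of the Schwinger–Dyson equation for a family of loops `p` each of which
cancels against exactly one member of the family. -/
lemma isBigO_integral_loopTrace_mul_pow_sub [DecidableEq ι] (hp : ∀ i, FreeGroup.mk (p i) ≠ 1)
    (i : ι) (e : E) (k₀ : Fin (p i).length) (hsign : letterSign e (p i)[k₀] = 1)
    (hcut : cutLeft (p i) k₀ = [])
    (hsplit : ∀ k ≠ k₀, letterSign e (p i)[k] ≠ 0 →
      FreeGroup.mk (cutLeft (p i) k) ≠ 1 ∧ FreeGroup.mk (cutRight (p i) k) ≠ 1)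
    (hmerge : ∑ j, ∑ k : Fin (p j).length, letterSign e (p j)[k] *
      (if FreeGroup.mk (cutLeft (p j) k ++ p i ++ cutRight (p j) k) = 1 then 1 else 0) = -1)
    (m : ℕ) :
    (fun N => ∫ U, loopTrace U (p i) * (∑ i, loopTrace U (p i)) ^ m ∂(μ N) -
      m * ∫ U, (∑ i, loopTrace U (p i)) ^ (m - 1) ∂(μ N)) =O[atTop]
      (fun N : ℕ => (N : ℝ)⁻¹) := by
  set Y : ∀ N, (E → Matrix.unitaryGroup (Fin N) ℂ) → ℂ :=
    fun N U => ∑ i, loopTrace U (p i) with hY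
  have hYc (N : ℕ) : Continuous (Y N) := continuous_sum_loopTrace p N
  set J : ∀ N (j : ι), Fin (p j).length → ℂ := fun N j k =>
    ∫ U, loopTrace U (cutLeft (p j) k ++ p i ++ cutRight (p j) k) * Y N U ^ (m - 1) ∂(μ N) with hJ
  set δ : ∀ j : ι, Fin (p j).length → ℂ := fun j k =>
    if FreeGroup.mk (cutLeft (p j) k ++ p i ++ cutRight (p j) k) = 1 then 1 else 0 with hδ
  have hSD (N : ℕ) : N * (∫ U, loopTrace U (p i) * Y N U ^ m ∂(μ N) -
        m * ∫ U, Y N U ^ (m - 1) ∂(μ N)) =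
      -(∑ k ∈ Finset.univ.erase k₀, letterSign e (p i)[k] *
          ∫ U, loopTrace U (cutLeft (p i) k) * loopTrace U (cutRight (p i) k) *
            Y N U ^ m ∂(μ N)) -
        m * ∑ j, ∑ k : Fin (p j).length, letterSign e (p j)[k] *
          (J N j k - δ j k * (N * ∫ U, Y N U ^ (m - 1) ∂(μ N))) := by
    have h := ((HasEdgeVar.sum Finset.univ fun j _ =>
      hasEdgeVar_loopTrace (N := N) e (p j)).pow m).schwingerDyson (μ := μ N) (p i)
    rw [← Finset.add_sum_erase _ _ (Finset.mem_univ k₀)] at h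
    have happ := cutLeft_append_cutRight (p i) k₀
    rw [hcut, List.nil_append] at happ
    have hmergeInt : ∫ U, m * Y N U ^ (m - 1) *
        ∑ j, (holonomyVar e (p j) U (holonomy U (p i))).trace ∂(μ N) =
        m * ∑ j, ∑ k : Fin (p j).length, letterSign e (p j)[k] * J N j k := by
      have hc (j : ι) (k : Fin (p j).length) :
          Continuous fun U : E → Matrix.unitaryGroup (Fin N) ℂ => letterSign e (p j)[k] *
            (loopTrace U (cutLeft (p j) k ++ p i ++ cutRight (p j) k) * Y N U ^ (m - 1)) :=
        continuous_const.mul ((continuous_loopTrace _).mul ((hYc N).pow _))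
      simp_rw [hJ, ← integral_const_mul]
      simp_rw [trace_holonomyVar_holonomy, mul_assoc, integral_const_mul (m : ℂ)]
      congr 1
      simp_rw [Finset.mul_sum, mul_left_comm (Y N _ ^ (m - 1)), mul_comm (Y N _ ^ (m - 1))]
      rw [integral_finsetSum _ fun j _ => integrable_of_continuous (μ N)
        (continuous_finsetSum _ fun k _ => hc j k)]
      refine Finset.sum_congr rfl fun j _ => ?_
      rw [integral_finsetSum _ fun k _ => integrable_of_continuous (μ N) (hc j k)]
    rw [hmergeInt, hcut, happ, hsign] at h
    simp only [loopTrace_nil, mul_assoc, integral_const_mul, one_mul] at h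
    simp_rw [mul_sub, Finset.sum_sub_distrib, ← mul_assoc (letterSign _ _), ← Finset.sum_mul]
    rw [hmerge]
    simp only [mul_assoc]
    linear_combination h
  have hbdd : (fun N : ℕ => (N : ℂ) * (∫ U, loopTrace U (p i) * Y N U ^ m ∂(μ N) -
        m * ∫ U, Y N U ^ (m - 1) ∂(μ N))) =O[atTop] (fun _ => (1 : ℝ)) := by
    simp_rw [hSD]
    refine Asymptotics.IsBigO.sub (Asymptotics.IsBigO.neg_left (Asymptotics.IsBigO.fun_sum ?_))
      (Asymptotics.IsBigO.const_mul_left (Asymptotics.IsBigO.fun_sum fun j _ =>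
        Asymptotics.IsBigO.fun_sum fun k _ => Asymptotics.IsBigO.const_mul_left ?_ _) _)
    · intro k hk
      by_cases h0 : letterSign e (p i)[k] = 0
      · simpa only [h0, zero_mul] using Asymptotics.isBigO_zero _ _
      refine Asymptotics.IsBigO.const_mul_left ?_ _
      have hlr := hsplit k (Finset.ne_of_mem_erase hk) h0
      have := isBigO_integral_loopProd_mul_pow (μ := μ) hp m
        (ws := [cutLeft (p i) k, cutRight (p i) k]) (by simpa using hlr)
      simpa using this
    · by_cases h1 : FreeGroup.mk (cutLeft (p j) k ++ p i ++ cutRight (p j) k) = 1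
      · simp only [hJ, hδ, if_pos h1, loopTrace_of_mk_eq_one _ h1, integral_const_mul, one_mul,
          sub_self]
        exact Asymptotics.isBigO_zero _ _
      · simp only [hJ, hδ, if_neg h1, zero_mul, sub_zero]
        have := isBigO_integral_loopProd_mul_pow (μ := μ) hp (m - 1)
          (ws := [cutLeft (p j) k ++ p i ++ cutRight (p j) k]) (by simpa using h1)
        simpa using this
  have hinv : (fun N : ℕ => (N : ℂ)⁻¹) =O[atTop] (fun N : ℕ => (N : ℝ)⁻¹) :=
    Asymptotics.IsBigO.of_bound 1 (Eventually.of_forall fun N => by simp)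
  refine ((hinv.mul hbdd).congr' ?_ (by simp))
  filter_upwards [eventually_ne_atTop 0] with N hN
  rw [← mul_assoc, inv_mul_cancel₀ (by exact_mod_cast hN), one_mul]

end LoopBounds

section Lattice

variable {D L : ℕ}

/-- The boundary of the plaquette at `x` spanned by the directions `μ` and `ν`. -/
def plaquette (x : Site D L) (μ ν : Fin D) : List (Edge D L × Bool) :=
  [((x, μ), true), ((x, ν), false), ((shift x ν, μ), false), ((shift x μ, ν), true)]

lemma isCyclicallyReduced_plaquette (x : Site D L) {μ ν : Fin D} (h : μ ≠ ν) :
    FreeGroup.IsCyclicallyReduced (plaquette x μ ν) := by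
  simp [plaquette, FreeGroup.IsCyclicallyReduced, FreeGroup.isReduced_cons_cons, h, h.symm]

lemma mk_eq_mk_iff_of_isReduced {E : Type*} {v w : List (E × Bool)} (hv : FreeGroup.IsReduced v)
    (hw : FreeGroup.IsReduced w) : FreeGroup.mk v = FreeGroup.mk w ↔ v = w := by
  classical
  refine ⟨fun h => ?_, fun h => h ▸ rfl⟩
  simpa [FreeGroup.toWord_mk, hv.reduce_eq, hw.reduce_eq] using congrArg FreeGroup.toWord h

lemma mk_append_append_eq_one_iff {E : Type*} {u v w : List (E × Bool)}
    (hv : FreeGroup.IsReduced v) (hwu : FreeGroup.IsReduced (FreeGroup.invRev (w ++ u))) :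
    FreeGroup.mk (u ++ v ++ w) = 1 ↔ v = FreeGroup.invRev (w ++ u) := by
  rw [← mk_eq_mk_iff_of_isReduced hv hwu, ← FreeGroup.inv_mk, ← FreeGroup.mul_mk,
    ← FreeGroup.mul_mk, ← FreeGroup.mul_mk, eq_inv_iff_mul_eq_one, ← mul_assoc, mul_assoc,
    mul_eq_one_comm]

lemma sum_letterSign_plaquette (x y : Site D L) {μ ν ρ σ : Fin D} (h : μ ≠ ν) (h' : ρ ≠ σ) :
    ∑ k : Fin (plaquette y ρ σ).length, letterSign (x, μ) (plaquette y ρ σ)[k] *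
      (if FreeGroup.mk (cutLeft (plaquette y ρ σ) k ++ plaquette x μ ν ++
        cutRight (plaquette y ρ σ) k) = 1 then 1 else 0) =
      if y = x ∧ ρ = ν ∧ σ = μ then -1 else 0 := by
  have hred (k : Fin (plaquette y ρ σ).length) :
      FreeGroup.mk (cutLeft (plaquette y ρ σ) k ++ plaquette x μ ν ++
        cutRight (plaquette y ρ σ) k) = 1 ↔
      plaquette x μ ν = FreeGroup.invRev (cutRight (plaquette y ρ σ) k ++
        cutLeft (plaquette y ρ σ) k) := by
    refine mk_append_append_eq_one_iff (isCyclicallyReduced_plaquette x h).isReduced ?_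
    change Fin 4 at k
    fin_cases k <;>
      simp [plaquette, cutLeft, cutRight, cutPos, FreeGroup.invRev, FreeGroup.isReduced_cons_cons,
        h', h'.symm]
  simp_rw [hred]
  change ∑ k : Fin 4, _ = _
  rw [Fin.sum_univ_four]
  by_cases hc : y = x ∧ ρ = ν ∧ σ = μ
  · obtain ⟨rfl, rfl, rfl⟩ := hc
    simp [plaquette, cutLeft, cutRight, cutPos, FreeGroup.invRev, letterSign]
  · simp only [plaquette, cutLeft, cutRight, cutPos, FreeGroup.invRev, letterSign]
    simp
    grind

/-- The plaquettes of the lattice, each with its two orientations. -/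
abbrev OrientedPlaquette (D L : ℕ) := Site D L × {q : Fin D × Fin D // q.1 ≠ q.2}

/-- The loop around an oriented plaquette. -/
def OrientedPlaquette.loop (i : OrientedPlaquette D L) : List (Edge D L × Bool) :=
  plaquette i.1 i.2.1.1 i.2.1.2

lemma card_orientedPlaquette (D L : ℕ) [NeZero L] :
    (Fintype.card (OrientedPlaquette D L) : ℝ) = L ^ D * (D * (D - 1)) := by
  have h1 : Fintype.card {q : Fin D × Fin D // q.1 = q.2} = D := by
    rw [Fintype.card_congr (Equiv.subtypeProdEquivSigmaSubtype _)]
    simp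
  have h := Fintype.card_subtype_compl (fun q : Fin D × Fin D => q.1 = q.2)
  rw [h1, Fintype.card_prod, Fintype.card_fin] at h
  rw [Fintype.card_prod, Fintype.card_pi, h]
  simp only [ZMod.card, Finset.prod_const, Finset.card_univ, Fintype.card_fin]
  rw [Nat.cast_mul, Nat.cast_sub (Nat.le_mul_self D)]
  push_cast
  ring

/-- The sum of the traces of all oriented plaquettes. -/
def plaquetteSum {N : ℕ} [NeZero L] (U : Conf D L N) : ℂ :=
  ∑ i : OrientedPlaquette D L, loopTrace U i.loop

lemma continuous_plaquetteSum {N : ℕ} [NeZero L] :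
    Continuous (plaquetteSum : Conf D L N → ℂ) :=
  continuous_sum_loopTrace _ N

lemma trace_plaquette {N : ℕ} (U : Conf D L N) (x : Site D L) (μ ν : Fin D) :
    loopTrace U (plaquette x μ ν) =
      Matrix.trace ((U (x, ν) : Matrix (Fin N) (Fin N) ℂ)ᴴ
          * (U (shift x ν, μ) : Matrix (Fin N) (Fin N) ℂ)ᴴ
          * (U (shift x μ, ν) : Matrix (Fin N) (Fin N) ℂ)
          * (U (x, μ) : Matrix (Fin N) (Fin N) ℂ)) := by
  rw [Matrix.trace_mul_comm, loopTrace, plaquette, holonomy_cons, holonomy_cons _ _ [_, _],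
    holonomy_cons _ _ [_]]
  simp only [holonomy_singleton_true, holonomy_singleton_false, mul_assoc]

lemma loopTrace_plaquette_swap {N : ℕ} (U : Conf D L N) (x : Site D L) (μ ν : Fin D) :
    loopTrace U (plaquette x ν μ) = star (loopTrace U (plaquette x μ ν)) := by
  rw [trace_plaquette, trace_plaquette, ← Matrix.trace_conjTranspose]
  simp only [Matrix.conjTranspose_mul, Matrix.conjTranspose_conjTranspose, mul_assoc]

lemma plaquetteSum_eq {N : ℕ} [NeZero L] (hN : N ≠ 0) (U : Conf D L N) :
    plaquetteSum U = ((2 * L ^ D * (N * wilsonAction D L N U) : ℝ) : ℂ) := by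
  have hsite (x : Site D L) :
      ∑ q : {q : Fin D × Fin D // q.1 ≠ q.2}, loopTrace U (plaquette x q.1.1 q.1.2) =
        ((∑ q ∈ Finset.univ.filter (fun q : Fin D × Fin D => q.1 < q.2),
          2 * (loopTrace U (plaquette x q.1 q.2)).re : ℝ) : ℂ) := by
    rw [← Finset.sum_subtype (Finset.univ.filter fun q : Fin D × Fin D => q.1 ≠ q.2) (by simp)
      fun q => loopTrace U (plaquette x q.1 q.2)]
    have hsplit (q : Fin D × Fin D) :
        (if q.1 ≠ q.2 then loopTrace U (plaquette x q.1 q.2) else 0) =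
          (if q.1 < q.2 then loopTrace U (plaquette x q.1 q.2) else 0) +
            if q.2 < q.1 then loopTrace U (plaquette x q.1 q.2) else 0 := by
      rcases lt_trichotomy q.1 q.2 with h | h | h
      · simp [h, h.ne, h.not_gt]
      · simp [h]
      · simp [h, h.ne', h.not_gt]
    have hswap : (∑ q : Fin D × Fin D,
          if q.2 < q.1 then loopTrace U (plaquette x q.1 q.2) else 0) =
        ∑ q : Fin D × Fin D, if q.1 < q.2 then loopTrace U (plaquette x q.2 q.1) else 0 :=
      ((Equiv.prodComm (Fin D) (Fin D)).sum_comp _).symm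
    rw [Finset.sum_filter, Finset.sum_congr rfl fun q _ => hsplit q, Finset.sum_add_distrib,
      hswap, ← Finset.sum_filter, ← Finset.sum_filter, ← Finset.sum_add_distrib,
      Complex.ofReal_sum]
    refine Finset.sum_congr rfl fun q _ => ?_
    rw [loopTrace_plaquette_swap U x q.1 q.2]
    exact Complex.add_conj _
  have hL : (L : ℝ) ≠ 0 := Nat.cast_ne_zero.2 (NeZero.ne L)
  have hN' : (N : ℝ) ≠ 0 := Nat.cast_ne_zero.2 hN
  simp only [plaquetteSum, OrientedPlaquette.loop, Fintype.sum_prod_type, hsite]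
  rw [← Complex.ofReal_sum, wilsonAction]
  congr 1
  simp only [← trace_plaquette, ← Finset.mul_sum]
  field_simp

lemma continuous_wilsonAction [NeZero L] (N : ℕ) : Continuous (wilsonAction D L N) := by
  unfold wilsonAction
  simp only [← trace_plaquette]
  exact continuous_const.mul <| continuous_finsetSum _ fun x _ => continuous_finsetSum _ fun q _ =>
    continuous_const.mul (Complex.continuous_re.comp (continuous_loopTrace _))

lemma integral_plaquetteSum_pow {N : ℕ} [NeZero L] (P : Measure (Conf D L N)) (hN : N ≠ 0)
    (l : ℕ) :
    ∫ U, plaquetteSum U ^ l ∂P =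
      (((2 * L ^ D) ^ l * (N ^ l * ∫ t, t ^ l ∂(P.map (wilsonAction D L N))) : ℝ) : ℂ) := by
  rw [integral_map (continuous_wilsonAction N).aemeasurable (by fun_prop), ← mul_assoc,
    ← integral_const_mul, ← integral_complex_ofReal]
  congr 1
  funext U
  rw [plaquetteSum_eq hN]
  push_cast
  ring

variable [NeZero L] {P : ∀ N : ℕ, Measure (Conf D L N)}
  [∀ N, IsProbabilityMeasure (P N)] [∀ N, (P N).IsMulLeftInvariant]

lemma isBigO_integral_loopTrace_mul_plaquetteSum_pow (i : OrientedPlaquette D L) (m : ℕ) :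
    (fun N => ∫ U, loopTrace U i.loop * plaquetteSum U ^ m ∂(P N) -
      m * ∫ U, plaquetteSum U ^ (m - 1) ∂(P N)) =O[atTop] (fun N : ℕ => (N : ℝ)⁻¹) := by
  have hred (i : OrientedPlaquette D L) : FreeGroup.IsCyclicallyReduced i.loop :=
    isCyclicallyReduced_plaquette _ i.2.2
  refine isBigO_integral_loopTrace_mul_pow_sub
    (fun i => mk_ne_one_of_isReduced (hred i).isReduced (List.cons_ne_nil _ _)) i (i.1, i.2.1.1)
    ⟨0, by simp [OrientedPlaquette.loop, plaquette]⟩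
    (by simp [OrientedPlaquette.loop, plaquette, letterSign])
    (by simp [OrientedPlaquette.loop, plaquette, cutLeft, cutPos])
    (mk_cut_ne_one_of_cons_true (hred i)) ?_ m
  have hswap (j : OrientedPlaquette D L) :
      (j.1 = i.1 ∧ j.2.1.1 = i.2.1.2 ∧ j.2.1.2 = i.2.1.1) ↔
        j = (i.1, ⟨i.2.1.swap, i.2.2.symm⟩) := by
    simp [Prod.ext_iff, Subtype.ext_iff]
  exact (Finset.sum_congr rfl fun j _ => sum_letterSign_plaquette i.1 j.1 i.2.2 j.2.2).trans
    (by simp [hswap])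

lemma isBigO_integral_plaquetteSum_pow_succ (m : ℕ) :
    (fun N => ∫ U, plaquetteSum U ^ (m + 1) ∂(P N) -
      (Fintype.card (OrientedPlaquette D L) : ℝ) * m * ∫ U, plaquetteSum U ^ (m - 1) ∂(P N))
      =O[atTop] (fun N : ℕ => (N : ℝ)⁻¹) := by
  refine (Asymptotics.IsBigO.fun_sum (s := Finset.univ) fun i _ =>
    isBigO_integral_loopTrace_mul_plaquetteSum_pow (P := P) i m).congr_left fun N => ?_
  have hc (i : OrientedPlaquette D L) :
      Continuous fun U : Conf D L N => loopTrace U i.loop * plaquetteSum U ^ m :=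
    (continuous_loopTrace _).mul (continuous_plaquetteSum.pow m)
  rw [Finset.sum_sub_distrib, ← integral_finsetSum _ fun i _ => integrable_of_continuous _ (hc i)]
  simp only [← Finset.sum_mul, Finset.sum_const, Finset.card_univ, nsmul_eq_mul, mul_assoc,
    Complex.ofReal_natCast, pow_succ']
  rfl

/-- The moments of the centred Gaussian of variance `c`. -/
def gaussianMoment (c : ℝ) (l : ℕ) : ℝ := if Odd l then 0 else (l - 1)‼ * c ^ (l / 2)

lemma gaussianMoment_add_two (c : ℝ) (l : ℕ) :
    gaussianMoment c (l + 2) = c * (l + 1) * gaussianMoment c l := by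
  unfold gaussianMoment
  have hodd : Odd (l + 2) ↔ Odd l := by simp [Nat.odd_add]
  by_cases h : Odd l
  · simp [h, hodd]
  · rw [if_neg (hodd.not.2 h), if_neg h, Nat.add_div_right l two_pos, pow_succ]
    rcases l with _ | l
    · simp
    · simp only [Nat.add_sub_cancel, show l + 1 + 2 - 1 = l + 2 by omega, Nat.doubleFactorial]
      push_cast
      ring

lemma isBigO_sub_gaussianMoment {a : ℕ → ℕ → ℂ} {c : ℝ} {g : ℕ → ℝ} (h0 : ∀ N, a 0 N = 1)
    (hrec : ∀ m : ℕ, (fun N => a (m + 1) N - c * m * a (m - 1) N) =O[atTop] g) (l : ℕ) :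
    (fun N => a l N - gaussianMoment c l) =O[atTop] g := by
  induction l using Nat.twoStepInduction with
  | zero => simpa [gaussianMoment, h0] using Asymptotics.isBigO_zero g atTop
  | one => simpa [gaussianMoment] using hrec 0
  | more l ih _ =>
    refine ((hrec (l + 1)).add (ih.const_mul_left (c * (l + 1)))).congr_left fun N => ?_
    rw [gaussianMoment_add_two]
    push_cast
    ring

lemma gaussianMoment_card_orientedPlaquette (hD : 2 ≤ D) (l : ℕ) :
    gaussianMoment (Fintype.card (OrientedPlaquette D L)) l = (2 * L ^ D) ^ l *
      (if Odd l then 0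
        else ((l - 1)‼ : ℝ) / ((4 * L ^ D : ℝ) / ((D : ℝ) * ((D : ℝ) - 1))) ^ (l / 2)) := by
  unfold gaussianMoment
  split_ifs with h
  · simp
  obtain ⟨r, rfl⟩ := even_iff_two_dvd.1 (Nat.not_odd_iff_even.1 h)
  have hL : (L : ℝ) ≠ 0 := Nat.cast_ne_zero.2 (NeZero.ne L)
  have hD' : (2 : ℝ) ≤ D := by exact_mod_cast hD
  have hD0 : (D : ℝ) ≠ 0 := by linarith
  have hD1 : (D : ℝ) - 1 ≠ 0 := by linarith
  rw [card_orientedPlaquette, Nat.mul_div_cancel_left r two_pos, pow_mul, mul_div_assoc',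
    mul_comm (((2 * (L : ℝ) ^ D) ^ 2) ^ r), mul_div_assoc, ← div_pow]
  congr 2
  field_simp
  ring

end Lattice

/-- **Moment asymptotics for the pushforward of Haar measure by the Wilson action.**
With `K = L^D`, `m_l = 0` for odd `l` and `m_l = (l-1)‼ / (4K/(D(D-1)))^(l/2)` for even `l`,
the `l`-th moment of `ρ_N` satisfies `∫ t^l dρ_N = m_l/N^l + O(1/N^(l+1))`: there are a
constant `C > 0` and an `N₀` with `|N^l ∫ t^l dρ_N − m_l| ≤ C/N` for all `N ≥ N₀`. -/
theorem wilson_moment_asymptotic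
    (D L : ℕ) [NeZero L] (hD : 2 ≤ D) (hL : 1 ≤ L)
    (haarU : ∀ N : ℕ, Measure (Matrix.unitaryGroup (Fin N) ℂ))
    [∀ N, (haarU N).IsHaarMeasure] [∀ N, IsProbabilityMeasure (haarU N)]
    (l : ℕ) (hl : 1 ≤ l) :
    ∃ C > (0 : ℝ), ∃ N₀ : ℕ, ∀ N ≥ N₀,
      |(N : ℝ) ^ l *
          (∫ t, t ^ l ∂((confMeasure D L N (haarU N)).map (wilsonAction D L N))) -
        (if Odd l then 0
          else ((l - 1)‼ : ℝ) / ((4 * L ^ D : ℝ) / ((D : ℝ) * ((D : ℝ) - 1))) ^ (l / 2))| ≤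
      C / N := by
  have hprob (N : ℕ) : IsProbabilityMeasure (confMeasure D L N (haarU N)) :=
    inferInstanceAs (IsProbabilityMeasure (Measure.pi fun _ => haarU N))
  have hinv (N : ℕ) : (confMeasure D L N (haarU N)).IsMulLeftInvariant :=
    inferInstanceAs (Measure.pi fun _ => haarU N).IsMulLeftInvariant
  obtain ⟨C, hC0, hC⟩ := (isBigO_sub_gaussianMoment
    (a := fun m N => ∫ U, plaquetteSum U ^ m ∂(confMeasure D L N (haarU N))) (by simp)
    (isBigO_integral_plaquetteSum_pow_succ (P := fun N => confMeasure D L N (haarU N)))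
    l).exists_pos
  obtain ⟨N₀, hN₀⟩ := eventually_atTop.1 hC.bound
  have hK : (0 : ℝ) < (2 * L ^ D) ^ l := by positivity
  refine ⟨C / (2 * L ^ D) ^ l, by positivity, max N₀ 1, fun N hN => ?_⟩
  have h := hN₀ N ((le_max_left _ _).trans hN)
  rw [integral_plaquetteSum_pow _
      (Nat.one_le_iff_ne_zero.1 ((le_max_right _ _).trans hN)),
    gaussianMoment_card_orientedPlaquette hD, ← Complex.ofReal_sub, Complex.norm_real, ← mul_sub,
    norm_mul, Real.norm_of_nonneg hK.le, Real.norm_eq_abs, norm_inv, Real.norm_natCast] at h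
  rw [div_right_comm, le_div_iff₀' hK]
  exact h

end
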